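/- arXiv:2212.10627 — 3 statements merged into one kernel-verified Lean document; each statement's English description precedes it below -/
import Mathlib

section
/- Let r ≥ 5 be a rational prime, K a totally real number field, L := K(ζ_r), and p a rational prime. Suppose (x, y, z) ∈ 𝒪_L³ is a nontrivial solution of x^r + y^r = z^p with x, y, z pairwise coprime. Then for all 0 ≤ i < j ≤ r−1, no prime ideal 𝔭 of 𝒪_L that does not lie above r divides both x + ζ_r^i·y and x + ζ_r^j·y. -/
open NumberField IsDedekindDomain IntermediateField
open scoped Classical

/-!
An ideal containing both `x + a * y` and `x + b * y` contains `(a - b) * x` and `(a - b) * y`, hence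
`a - b` when `x` and `y` are coprime. If `a` and `b` are distinct `r`-th roots of unity in a domain,
then `∑ a ^ k * b ^ (r - 1 - k)` vanishes; it is congruent to `r * b ^ (r - 1)` modulo `a - b`, so
`a - b` divides `r` and the ideal contains `r`.
-/

theorem sub_mem_of_add_mul_mem {R : Type*} [CommRing R] {I : Ideal R} {x y a b : R}
    (hxy : IsCoprime x y) (ha : x + a * y ∈ I) (hb : x + b * y ∈ I) : a - b ∈ I := by
  obtain ⟨u, v, huv⟩ := hxy
  have hx : (a - b) * x ∈ I := by
    convert I.sub_mem (I.mul_mem_left a hb) (I.mul_mem_left b ha) using 1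
    ring
  have hy : (a - b) * y ∈ I := by
    convert I.sub_mem ha hb using 1
    ring
  have h_comb : a - b = u * ((a - b) * x) + v * ((a - b) * y) := by
    linear_combination (b - a) * huv
  rw [h_comb]
  exact I.add_mem (I.mul_mem_left u hx) (I.mul_mem_left v hy)

theorem sub_dvd_natCast_of_pow_eq_one {R : Type*} [CommRing R] [IsDomain R] {a b : R} {n : ℕ}
    (ha : a ^ n = 1) (hb : b ^ n = 1) (hab : a ≠ b) : a - b ∣ (n : R) := by
  rcases eq_or_ne n 0 with rfl | hn
  · simp
  have h_geom : ∑ k ∈ Finset.range n, a ^ k * b ^ (n - 1 - k) = 0 := by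
    refine eq_zero_of_ne_zero_of_mul_right_eq_zero (sub_ne_zero.mpr hab) ?_
    rw [(Commute.all a b).geom_sum₂_mul, ha, hb, sub_self]
  have h_dvd : a - b ∣ n * b ^ (n - 1) :=
    (dvd_geom_sum₂_iff_of_dvd_sub dvd_rfl).mp (h_geom ▸ dvd_zero _)
  exact ((IsUnit.of_pow_eq_one hb hn).pow (n - 1)).dvd_mul_right.mp h_dvd

theorem factors_coprime_outside_r_general {R : Type*} [CommRing R] [IsDomain R] {r : ℕ} {η : R}
    (hη : IsPrimitiveRoot η r) {x y : R} (hxy : IsCoprime x y) {i j : ℕ} (hi : i < r) (hj : j < r)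
    (hij : i ≠ j) {I : Ideal R} (hr : (r : R) ∉ I) :
    ¬ (x + η ^ i * y ∈ I ∧ x + η ^ j * y ∈ I) := by
  rintro ⟨hxi, hxj⟩
  have h_root (k : ℕ) : (η ^ k) ^ r = 1 := by rw [pow_right_comm, hη.pow_eq_one, one_pow]
  have h_ne : η ^ i ≠ η ^ j := fun h ↦ hij (hη.pow_inj hi hj h)
  exact hr (I.mem_of_dvd (sub_dvd_natCast_of_pow_eq_one (h_root i) (h_root j) h_ne)
    (sub_mem_of_add_mul_mem hxy hxi hxj))

theorem factors_coprime_outside_r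
    (r : ℕ) (hr : r.Prime) (hr5 : 5 ≤ r)
    (K : Type) [Field K] [NumberField K]
    (hTR : ∀ v : InfinitePlace K, v.IsReal)
    (ζ : AlgebraicClosure K) (hζ : IsPrimitiveRoot ζ r)
    -- `L = K(ζ_r)`
    (L : IntermediateField K (AlgebraicClosure K)) [NumberField L]
    (hL : L = K⟮ζ⟯)
    -- `ζ_r` as an element of `𝒪_L`
    (η : 𝓞 L) (hη : ((η : L) : AlgebraicClosure K) = ζ)
    (p : ℕ) (hp : p.Prime)
    (x y z : 𝓞 L) (hsol : x ^ r + y ^ r = z ^ p)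
    (hnt : x * y * z ≠ 0)
    (hxy : IsCoprime x y) (hyz : IsCoprime y z) (hxz : IsCoprime x z) :
    ∀ i j : ℕ, i < j → j ≤ r - 1 →
      ∀ 𝔭 : HeightOneSpectrum (𝓞 L), (r : 𝓞 L) ∉ 𝔭.asIdeal →
        ¬ (x + η ^ i * y ∈ 𝔭.asIdeal ∧ x + η ^ j * y ∈ 𝔭.asIdeal) := by
  subst hη
  intro i j hij hj 𝔭 hr𝔭
  have hηr : IsPrimitiveRoot η r := IsPrimitiveRoot.of_map_of_injective
    (f := algebraMap (𝓞 L) (AlgebraicClosure K)) hζ (FaithfulSMul.algebraMap_injective _ _)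
  exact factors_coprime_outside_r_general hηr hxy (by lia) (by lia) hij.ne hr𝔭
end

section
/- Let d be a square-free positive integer with d ≡ 5 (mod 8), let K := ℚ(√d) (so 𝒪_K = ℤ[(1+√d)/2]), and let r be an odd rational prime with r ≢ 1 (mod 8) and r ≢ d (mod 8). Then there is no v ∈ 𝒪_K with r ≡ v² (mod 32·𝒪_K). -/
open NumberField

/-!
The prime `2` is unramified in `K = ℚ(√d)` when `d ≡ 1 (mod 4)`: with `ω = (1 + √d) / 2`, a root of
`f = X² - X - (d - 1) / 4`, the number `f'(ω) = 2 * ω - 1` lies in the different and is coprime to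
`2`. Hence `2 𝓞 K` is radical. If `r` is odd and `r ≡ v² (mod 4)`, then `(v - 1)² ≡ 0 (mod 2)`, so
`v = 1 + 2 * u` and `v² ≡ 1 (mod 4)`, which forces `r ≡ 1 (mod 4)`. When `d ≡ 5 (mod 8)`, the odd
residues other than `1` and `d` modulo `8` are exactly those congruent to `3` modulo `4`.
-/

open Polynomial IntermediateField

section Different

attribute [local instance] FractionRing.liftAlgebra

theorem aeval_derivative_mem_differentIdeal_of_aeval_eq_zero {A B : Type*} (K L : Type*)
    [CommRing A] [IsDomain A] [IsIntegrallyClosed A] [CommRing B] [IsDedekindDomain B]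
    [Field K] [Field L] [Algebra A B] [Algebra A K] [Algebra A L] [Algebra B L] [Algebra K L]
    [IsScalarTower A K L] [IsScalarTower A B L] [IsFractionRing A K] [FiniteDimensional K L]
    [Algebra.IsSeparable K L] [IsIntegralClosure B A L] [Module.IsTorsionFree A B]
    {x : B} (hx : Algebra.adjoin K {algebraMap B L x} = ⊤) {f : A[X]} (hf : aeval x f = 0) :
    aeval x (derivative f) ∈ differentIdeal A B := by
  have hx_int : IsIntegral A x := IsIntegralClosure.isIntegral A L x
  obtain ⟨g, rfl⟩ := minpoly.isIntegrallyClosed_dvd hx_int hf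
  simpa using Ideal.mul_mem_right (aeval x g) _ (aeval_derivative_mem_differentIdeal A K L x hx)

theorem squarefree_map_of_isCoprime_differentIdeal {A B : Type*} [CommRing A] [CommRing B]
    [IsDedekindDomain A] [IsDedekindDomain B] [Algebra A B] [Module.IsTorsionFree A B]
    [Module.Finite A B] [Algebra.IsSeparable (FractionRing A) (FractionRing B)]
    {p : Ideal A} [p.IsMaximal] (hp : p ≠ ⊥)
    (h : IsCoprime (p.map (algebraMap A B)) (differentIdeal A B)) :
    Squarefree (p.map (algebraMap A B)) := by
  intro P hP
  have hP_diff : P ∣ differentIdeal A B := by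
    simpa using pow_sub_one_dvd_differentIdeal A P 2 hp (by rwa [sq])
  exact h.isUnit_of_dvd' (dvd_of_mul_left_dvd hP) hP_diff

end Different

theorem isRadical_of_squarefree_span_singleton {R : Type*} [CommRing R] [IsDedekindDomain R]
    {a : R} (ha : Squarefree (Ideal.span {a})) : IsRadical a := by
  intro n x hx
  rw [← Ideal.mem_span_singleton, ← Ideal.dvd_span_singleton] at hx ⊢
  exact ha.isRadical n _ (by rwa [Ideal.span_singleton_pow])

theorem algebraMap_dvd_algebraMap_iff_of_faithfullyFlat {A B : Type*} [CommRing A] [CommRing B]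
    [Algebra A B] [Module.FaithfullyFlat A B] {a b : A} :
    algebraMap A B a ∣ algebraMap A B b ↔ a ∣ b := by
  rw [← Ideal.mem_span_singleton, ← Ideal.mem_span_singleton, ← Set.image_singleton,
    ← Ideal.map_span, ← Ideal.mem_comap, Ideal.comap_map_eq_self_of_faithfullyFlat]

section SquaresModFour

variable {R : Type*} [CommRing R]

theorem four_dvd_sq_of_two_dvd_sq (h2 : IsRadical (2 : R)) {v : R} (hv : 2 ∣ v ^ 2) :
    4 ∣ v ^ 2 := by
  obtain ⟨u, rfl⟩ := h2 2 v hv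
  exact ⟨u ^ 2, by ring⟩

theorem four_dvd_sq_sub_one_of_two_dvd_sq_sub_one (h2 : IsRadical (2 : R)) {v : R}
    (hv : 2 ∣ v ^ 2 - 1) : 4 ∣ v ^ 2 - 1 := by
  have hv_sub : 2 ∣ (v - 1) ^ 2 := by
    rw [show (v - 1) ^ 2 = v ^ 2 - 1 - 2 * (v - 1) by ring]
    exact dvd_sub hv (dvd_mul_right 2 _)
  obtain ⟨u, hu⟩ := h2 2 (v - 1) hv_sub
  exact ⟨u ^ 2 + u, by rw [eq_add_of_sub_eq hu]; ring⟩

theorem emod_four_eq_zero_or_one_of_four_dvd_sub_sq [Module.FaithfullyFlat ℤ R]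
    (h2 : IsRadical (2 : R)) {n : ℤ} {v : R} (hv : 4 ∣ (n : R) - v ^ 2) :
    n % 4 = 0 ∨ n % 4 = 1 := by
  have four_dvd_of_cast {m : ℤ} (hm : (4 : R) ∣ m) : 4 ∣ m :=
    (algebraMap_dvd_algebraMap_iff_of_faithfullyFlat (B := R)).mp (by simpa using hm)
  have two_dvd : (2 : R) ∣ n - v ^ 2 := dvd_trans ⟨2, by norm_num⟩ hv
  rcases Int.even_or_odd' n with ⟨k, rfl | rfl⟩
  · have hv_even : 2 ∣ v ^ 2 := by
      rwa [Int.cast_mul, Int.cast_ofNat, dvd_sub_right (dvd_mul_right 2 _)] at two_dvd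
    have : 4 ∣ 2 * k :=
      four_dvd_of_cast ((dvd_sub_left (four_dvd_sq_of_two_dvd_sq h2 hv_even)).mp hv)
    omega
  · have hv_odd : 2 ∣ v ^ 2 - 1 := by
      rw [← dvd_sub_right (dvd_mul_right 2 (k : R))]
      convert two_dvd using 1
      push_cast
      ring
    have : 4 ∣ 2 * k := four_dvd_of_cast <| by
      convert dvd_add hv (four_dvd_sq_sub_one_of_two_dvd_sq_sub_one h2 hv_odd) using 1
      push_cast
      ring
    omega

end SquaresModFour

theorem adjoin_simple_eq_top_of_finrank_prime {F E : Type*} [Field F] [Field E] [Algebra F E]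
    (hp : (Module.finrank F E).Prime) {x : E} (hx : x ∉ (⊥ : IntermediateField F E)) :
    F⟮x⟯ = ⊤ := by
  have := isSimpleOrder_of_finrank_prime F E hp
  exact (eq_bot_or_eq_top F⟮x⟯).resolve_left (mt adjoin_simple_eq_bot_iff.mp hx)

theorem notMem_bot_of_sq_eq_natCast {K : Type*} [Field K] [CharZero K] {d : ℕ}
    (hd : ¬ IsSquare d) {s : K} (hs : s ^ 2 = d) : s ∉ (⊥ : IntermediateField ℚ K) := by
  rw [mem_bot]
  rintro ⟨q, rfl⟩
  have hq : q * q = d := by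
    rw [← sq]
    exact (algebraMap ℚ K).injective (by simpa using hs)
  exact hd (Rat.isSquare_natCast_iff.mp ⟨q, hq.symm⟩)

section NumberField

variable {K : Type*} [Field K] [NumberField K]

theorem isRadical_intCast_of_isCoprime_aeval_derivative {p : ℤ} (hp : Prime p) {x : 𝓞 K}
    (hx : ℚ⟮(x : K)⟯ = ⊤) {f : ℤ[X]} (hf : aeval x f = 0)
    (hpf : IsCoprime (p : 𝓞 K) (aeval x (derivative f))) : IsRadical (p : 𝓞 K) := by
  have hp_max : (Ideal.span {p}).IsMaximal :=
    PrincipalIdealRing.isMaximal_of_irreducible hp.irreducible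
  have hp_bot : Ideal.span {p} ≠ ⊥ := by simpa using hp.ne_zero
  have hp_map : (Ideal.span {p}).map (algebraMap ℤ (𝓞 K)) = Ideal.span {(p : 𝓞 K)} := by
    simp [Ideal.map_span]
  have hf_diff : aeval x (derivative f) ∈ differentIdeal ℤ (𝓞 K) :=
    aeval_derivative_mem_differentIdeal_of_aeval_eq_zero ℚ K (adjoin_eq_top_iff.mp hx) hf
  have hp_diff : IsCoprime (Ideal.span {(p : 𝓞 K)}) (differentIdeal ℤ (𝓞 K)) :=
    ((Ideal.isCoprime_span_singleton_iff _ _).mpr hpf).of_isCoprime_of_dvd_right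
      (Ideal.dvd_span_singleton.mpr hf_diff)
  apply isRadical_of_squarefree_span_singleton
  rw [← hp_map] at hp_diff ⊢
  exact squarefree_map_of_isCoprime_differentIdeal hp_bot hp_diff

theorem isRadical_two_of_sq_sub_self_eq_intCast {x : 𝓞 K} (hx : ℚ⟮(x : K)⟯ = ⊤) {k : ℤ}
    (hk : x ^ 2 - x = k) : IsRadical (2 : 𝓞 K) := by
  have hroot : aeval x (X ^ 2 - X - C k) = 0 := by simp [hk]
  have hcoprime : IsCoprime (2 : 𝓞 K) (aeval x (derivative (X ^ 2 - X - C k))) := by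
    refine ⟨x, -1, ?_⟩
    simp only [derivative_X_sq, derivative_X, derivative_C, map_sub, map_mul, aeval_X, map_one,
      map_zero, map_ofNat]
    ring
  exact_mod_cast isRadical_intCast_of_isCoprime_aeval_derivative Int.prime_two hx hroot
    (mod_cast hcoprime)

theorem isRadical_two_of_sq_eq_intCast {d : ℤ} (hd : d % 4 = 1) {s : K} (hs : s ^ 2 = d)
    (hK : ℚ⟮s⟯ = ⊤) : IsRadical (2 : 𝓞 K) := by
  obtain ⟨k, rfl⟩ : ∃ k, d = 4 * k + 1 := ⟨d / 4, by omega⟩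
  have hω : ((1 + s) / 2) ^ 2 - (1 + s) / 2 = k := by
    push_cast at hs
    linear_combination hs / 4
  have hω_int : IsIntegral ℤ ((1 + s) / 2) :=
    ⟨X ^ 2 - X - C k, by monicity!, by simp [hω, -eq_intCast, -map_intCast]⟩
  obtain ⟨x, hx⟩ : ∃ x : 𝓞 K, (x : K) = (1 + s) / 2 := ⟨⟨_, hω_int⟩, rfl⟩
  rw [← hx] at hω
  have hx_gen : ℚ⟮(x : K)⟯ = ⊤ := by
    rw [eq_top_iff, ← hK, adjoin_simple_le_iff, show s = 2 * x - 1 by rw [hx]; ring]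
    exact sub_mem (mul_mem (ofNat_mem _ 2) (mem_adjoin_simple_self ℚ _)) (one_mem _)
  exact isRadical_two_of_sq_sub_self_eq_intCast hx_gen (RingOfIntegers.ext (by simpa using hω))

end NumberField

theorem not_square_mod_32_in_real_quadratic_5_mod_8_general
    {K : Type*} [Field K] [NumberField K] {d : ℤ} (hd : d % 4 = 1)
    {s : K} (hs : s ^ 2 = d) (hK : ℚ⟮s⟯ = ⊤) {r : ℤ} (hr0 : r % 4 ≠ 0) (hr1 : r % 4 ≠ 1) :
    ¬ ∃ v : 𝓞 K, (r : 𝓞 K) - v ^ 2 ∈ Ideal.span ({(4 : 𝓞 K)} : Set (𝓞 K)) := by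
  rintro ⟨v, hv⟩
  have := emod_four_eq_zero_or_one_of_four_dvd_sub_sq (isRadical_two_of_sq_eq_intCast hd hs hK)
    (Ideal.mem_span_singleton.mp hv)
  tauto

theorem not_square_mod_32_in_real_quadratic_5_mod_8
    (d : ℕ) (hd : Squarefree d) (hdpos : 0 < d) (hd8 : d % 8 = 5)
    -- `K = ℚ(√d)`
    (K : Type*) [Field K] [NumberField K]
    (s : K) (hs : s ^ 2 = (d : K)) (hK2 : Module.finrank ℚ K = 2)
    (r : ℕ) (hr : r.Prime) (hodd : Odd r)
    (hr8 : r % 8 ≠ 1) (hrd8 : r % 8 ≠ d % 8) :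
    ¬ ∃ v : 𝓞 K, (r : 𝓞 K) - v ^ 2 ∈ Ideal.span ({(32 : 𝓞 K)} : Set (𝓞 K)) := by
  have hd_sq : ¬ IsSquare d := by
    rintro ⟨a, rfl⟩
    simp [Nat.isUnit_iff.mp (hd a dvd_rfl)] at hd8
  have hK : ℚ⟮s⟯ = ⊤ := adjoin_simple_eq_top_of_finrank_prime (hK2 ▸ Nat.prime_two)
    (notMem_bot_of_sq_eq_natCast hd_sq hs)
  have hr2 : r % 2 = 1 := Nat.odd_iff.mp hodd
  have h4 : (4 : 𝓞 K) ∣ 32 := ⟨8, by norm_num⟩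
  rintro ⟨v, hv⟩
  exact not_square_mod_32_in_real_quadratic_5_mod_8_general (d := d) (r := r) (by omega)
    (mod_cast hs) hK (by omega) (by omega)
    ⟨v, mod_cast Ideal.span_singleton_le_span_singleton.mpr h4 hv⟩
end

section
/- Let d be a square-free positive integer with d ≡ 2 or 3 (mod 4), let K := ℚ(√d) (so 𝒪_K = ℤ[√d]), and let r be an odd rational prime with r ≢ 1 (mod 8) and r ≢ d (mod 8). Then there is no v ∈ 𝒪_K with r ≡ v² (mod 16·𝒪_K). -/
open NumberField

/-!
Integrality of the trace and norm of `v = x + y√d` together with `d ≡ 2, 3 (mod 4)` forces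
`q * v = a + b√d` for integers `q`, `a`, `b` with `q` odd: the index of `ℤ[√d]` in `𝒪_K` is odd.
Clearing such odd denominators and comparing coordinates in `r ≡ v² (mod 8)` gives
`r * q² ≡ a² + d * b² (mod 8)` and `4 ∣ a * b`. Hence either `a` and `b` are both even and `4 ∣ r`,
or one of them is odd and the other divisible by `4`, so that `r ≡ 1` or `r ≡ d (mod 8)`.
-/

section QuadraticExtension

variable {F K : Type*} [Field F] [Field K] [Algebra F K] {s : K}

lemma linearIndependent_one_of_notMem_range (hs : s ∉ Set.range (algebraMap F K)) :
    LinearIndependent F ![1, s] := by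
  refine (LinearIndependent.pair_iff' one_ne_zero).mpr fun x hx ↦ hs ⟨x, ?_⟩
  rw [Algebra.algebraMap_eq_smul_one, hx]

variable [Algebra.IsQuadraticExtension F K]

lemma exists_eq_algebraMap_add_algebraMap_mul (hs : s ∉ Set.range (algebraMap F K)) (v : K) :
    ∃ x y : F, v = algebraMap F K x + algebraMap F K y * s := by
  have span_eq_top : Submodule.span F (Set.range ![1, s]) = ⊤ :=
    (linearIndependent_one_of_notMem_range hs).span_eq_top_of_card_eq_finrank
      (by simp [Algebra.IsQuadraticExtension.finrank_eq_two F K])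
  have hv : v ∈ Submodule.span F {1, s} := by
    rw [← Matrix.range_cons_cons_empty, span_eq_top]
    exact Submodule.mem_top
  obtain ⟨x, y, rfl⟩ := Submodule.mem_span_pair.mp hv
  exact ⟨x, y, by simp only [Algebra.smul_def, mul_one]⟩

variable [Algebra.IsSeparable F K] {d : F}

lemma exists_algEquiv_apply_eq_neg (hs : s ∉ Set.range (algebraMap F K))
    (hsd : s ^ 2 = algebraMap F K d) : ∃ σ : K ≃ₐ[F] K, σ s = -s := by
  obtain ⟨σ, hσ⟩ : ∃ σ : K ≃ₐ[F] K, σ s ≠ s := by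
    by_contra! fixed
    exact hs ((IsGalois.mem_range_algebraMap_iff_fixed s).mpr fixed)
  have hσ_sq : σ s ^ 2 = s ^ 2 := by rw [← map_pow, hsd, AlgEquiv.commutes]
  exact ⟨σ, (sq_eq_sq_iff_eq_or_eq_neg.mp hσ_sq).resolve_left hσ⟩

lemma isIntegral_two_mul_and_isIntegral_sq_sub {R : Type*} [CommRing R] [Algebra R F]
    [Algebra R K] [IsScalarTower R F K] (hs : s ∉ Set.range (algebraMap F K))
    (hsd : s ^ 2 = algebraMap F K d) {x y : F}
    (hv : IsIntegral R (algebraMap F K x + algebraMap F K y * s)) :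
    IsIntegral R (2 * x) ∧ IsIntegral R (x ^ 2 - d * y ^ 2) := by
  obtain ⟨σ, hσ⟩ := exists_algEquiv_apply_eq_neg hs hsd
  have conj_eq : σ (algebraMap F K x + algebraMap F K y * s) =
      algebraMap F K x - algebraMap F K y * s := by
    rw [map_add, map_mul, hσ, AlgEquiv.commutes, AlgEquiv.commutes]
    ring
  have conj_integral : IsIntegral R (algebraMap F K x - algebraMap F K y * s) :=
    conj_eq ▸ hv.map (σ.restrictScalars R)
  have trace_eq : algebraMap F K (2 * x) = (algebraMap F K x + algebraMap F K y * s) +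
      (algebraMap F K x - algebraMap F K y * s) := by
    rw [map_mul, map_ofNat]
    ring
  have norm_eq : algebraMap F K (x ^ 2 - d * y ^ 2) = (algebraMap F K x + algebraMap F K y * s) *
      (algebraMap F K x - algebraMap F K y * s) := by
    rw [map_sub, map_mul, map_pow, map_pow]
    linear_combination algebraMap F K y ^ 2 * hsd
  rw [← isIntegral_algebraMap_iff (algebraMap F K).injective, trace_eq,
    ← isIntegral_algebraMap_iff (algebraMap F K).injective, norm_eq]
  exact ⟨hv.add conj_integral, hv.mul conj_integral⟩

end QuadraticExtension

section Congruences

variable {d : ℤ}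

lemma not_isSquare_of_emod_four (hd : d % 4 = 2 ∨ d % 4 = 3) : ¬ IsSquare d := by
  rintro ⟨n, rfl⟩
  rcases Int.even_or_odd' n with ⟨k, rfl | rfl⟩ <;> ring_nf at hd <;> omega

lemma two_pow_dvd_of_dvd_odd_mul {q n : ℤ} (k : ℕ) (hq : Odd q) (h : 2 ^ k ∣ q * n) :
    2 ^ k ∣ n :=
  (Int.isCoprime_two_left.mpr hq).pow_left.dvd_of_dvd_mul_left h

lemma odd_and_even_and_even_of_mul_sq_eq (hd : d % 4 = 2 ∨ d % 4 = 3) {p q t n : ℤ}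
    (hpq : IsCoprime p q) (h : d * p ^ 2 = q ^ 2 * (t ^ 2 - 4 * n)) :
    Odd q ∧ Even p ∧ Even t := by
  have q_odd : Odd q := by
    by_contra hq
    obtain ⟨k, rfl⟩ := even_iff_two_dvd.mp (Int.not_odd_iff_even.mp hq)
    have p_odd : Odd p := Int.isCoprime_two_right.mp hpq.of_mul_right_left
    have four_dvd : 2 ^ 2 ∣ p ^ 2 * d := ⟨k ^ 2 * (t ^ 2 - 4 * n), by linear_combination h⟩
    have four_dvd_d : 2 ^ 2 ∣ d := two_pow_dvd_of_dvd_odd_mul 2 p_odd.pow four_dvd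
    omega
  obtain ⟨k, hk⟩ := Int.eight_dvd_sq_sub_one_of_odd q_odd
  have hmod : d * p ^ 2 ≡ t ^ 2 [ZMOD 4] :=
    Int.modEq_iff_dvd.mpr ⟨n * q ^ 2 - 2 * k * t ^ 2, by linear_combination -h - t ^ 2 * hk⟩
  have p_even : Even p := by
    by_contra hp
    have p_sq : p ^ 2 ≡ 1 [ZMOD 4] := Int.sq_mod_four_eq_one_of_odd (Int.not_even_iff_odd.mp hp)
    have d_modEq : d ≡ t ^ 2 [ZMOD 4] := by simpa using (p_sq.mul_left d).symm.trans hmod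
    exact not_isSquare_of_emod_four (d_modEq.eq ▸ hd) (IsSquare.sq t)
  have t_sq_even : 2 ∣ t ^ 2 :=
    (hmod.of_dvd (by norm_num)).dvd_iff.mp ((p_even.two_dvd.pow two_ne_zero).mul_left d)
  exact ⟨q_odd, p_even, even_iff_two_dvd.mpr (Int.prime_two.dvd_of_dvd_pow t_sq_even)⟩

lemma four_dvd_or_modEq_of_mul_sq_modEq {r a b q : ℤ} (hq : Odd q)
    (h : r * q ^ 2 ≡ a ^ 2 + d * b ^ 2 [ZMOD 8]) (hab : 4 ∣ a * b) :
    4 ∣ r ∨ r ≡ 1 [ZMOD 8] ∨ r ≡ d [ZMOD 8] := by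
  have sq_modEq_one {n : ℤ} (hn : Odd n) : n ^ 2 ≡ 1 [ZMOD 8] :=
    (Int.modEq_iff_dvd.mpr (Int.eight_dvd_sq_sub_one_of_odd hn)).symm
  have sq_modEq_zero {n : ℤ} (hn : 4 ∣ n) : n ^ 2 ≡ 0 [ZMOD 8] :=
    Int.modEq_zero_iff_dvd.mpr (dvd_trans (by norm_num) (pow_dvd_pow_of_dvd hn 2))
  have hr : r ≡ a ^ 2 + d * b ^ 2 [ZMOD 8] := calc
    r = r * 1 := (mul_one r).symm
    _ ≡ r * q ^ 2 [ZMOD 8] := (sq_modEq_one hq).symm.mul_left r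
    _ ≡ a ^ 2 + d * b ^ 2 [ZMOD 8] := h
  rcases Int.even_or_odd a with ha | ha
  · rcases Int.even_or_odd b with hb | hb
    · left
      have four_dvd_sq {n : ℤ} (hn : Even n) : 4 ∣ n ^ 2 := pow_dvd_pow_of_dvd hn.two_dvd 2
      have h4 : 4 ∣ a ^ 2 + d * b ^ 2 := (four_dvd_sq ha).add ((four_dvd_sq hb).mul_left d)
      exact (hr.of_dvd (by norm_num)).dvd_iff.mpr h4
    · right; right
      have ha4 : 4 ∣ a := two_pow_dvd_of_dvd_odd_mul 2 hb (by rwa [mul_comm])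
      simpa using hr.trans ((sq_modEq_zero ha4).add ((sq_modEq_one hb).mul_left d))
  · right; left
    have hb4 : 4 ∣ b := two_pow_dvd_of_dvd_odd_mul 2 ha hab
    simpa using hr.trans ((sq_modEq_one ha).add ((sq_modEq_zero hb4).mul_left d))

end Congruences

section RationalQuadratic

variable {K : Type*} [Field K] [CharZero K] {d : ℤ} {s : K}

lemma notMem_range_algebraMap_rat_of_sq_eq (hd : ¬ IsSquare d) (hs : s ^ 2 = d) :
    s ∉ Set.range (algebraMap ℚ K) := by
  rintro ⟨x, rfl⟩
  refine hd (Rat.isSquare_intCast_iff.mp ⟨x, (algebraMap ℚ K).injective ?_⟩)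
  rw [map_intCast, map_mul, ← hs, pow_two]

lemma eq_and_eq_of_add_mul_eq_add_mul (hd : ¬ IsSquare d) (hs : s ^ 2 = d) {a b a' b' : ℤ}
    (h : (a + b * s : K) = a' + b' * s) : a = a' ∧ b = b' := by
  have indep := linearIndependent_one_of_notMem_range (notMem_range_algebraMap_rat_of_sq_eq hd hs)
  have coeffs_eq_zero := LinearIndependent.pair_iff.mp indep (a - a') (b - b') (by
    simp only [Algebra.smul_def, map_sub, map_intCast, mul_one]
    linear_combination h)
  exact_mod_cast coeffs_eq_zero.imp sub_eq_zero.mp sub_eq_zero.mp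

lemma exists_odd_mul_eq_add_mul_of_isIntegral [Algebra.IsQuadraticExtension ℚ K]
    (hd : d % 4 = 2 ∨ d % 4 = 3) (hs : s ^ 2 = d) {v : K} (hv : IsIntegral ℤ v) :
    ∃ q a b : ℤ, Odd q ∧ q * v = a + b * s := by
  have hs_irrational := notMem_range_algebraMap_rat_of_sq_eq (not_isSquare_of_emod_four hd) hs
  obtain ⟨x, y, rfl⟩ := exists_eq_algebraMap_add_algebraMap_mul hs_irrational v
  obtain ⟨trace_integral, norm_integral⟩ :=
    isIntegral_two_mul_and_isIntegral_sq_sub (d := (d : ℚ)) hs_irrational (by simpa using hs) hv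
  obtain ⟨t, ht⟩ := IsIntegrallyClosed.isIntegral_iff.mp trace_integral
  obtain ⟨n, hn⟩ := IsIntegrallyClosed.isIntegral_iff.mp norm_integral
  simp only [algebraMap_int_eq, eq_intCast] at ht hn
  have num_eq : 2 * y * (2 * y).den = (2 * y).num := Rat.mul_den_eq_num _
  have discr_eq : d * (2 * y).num ^ 2 = ((2 * y).den : ℤ) ^ 2 * (t ^ 2 - 4 * n) := by
    qify
    rw [← num_eq, ht, hn]
    ring
  obtain ⟨den_odd, ⟨b, hb⟩, ⟨a, rfl⟩⟩ :=
    odd_and_even_and_even_of_mul_sq_eq hd (Rat.isCoprime_num_den _) discr_eq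
  refine ⟨(2 * y).den, (2 * y).den * a, b, den_odd, ?_⟩
  have hx : x = a := by
    push_cast at ht
    linarith
  have hy : (2 * y).den * y = b := by
    rw [hb] at num_eq
    push_cast at num_eq
    linarith
  have hyK : ((2 * y).den * y : K) = b := by exact_mod_cast congrArg (Rat.cast : ℚ → K) hy
  simp only [eq_ratCast, hx]
  push_cast
  linear_combination s * hyK

end RationalQuadratic

theorem not_square_mod_16_in_real_quadratic_2_3_mod_4_general
    (d : ℤ) (hd4 : d % 4 = 2 ∨ d % 4 = 3)
    (K : Type*) [Field K] [CharZero K] [Algebra.IsQuadraticExtension ℚ K]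
    (s : K) (hs : s ^ 2 = (d : K))
    (r : ℤ) (hr4 : ¬ 4 ∣ r) (hr8 : r % 8 ≠ 1) (hrd8 : r % 8 ≠ d % 8) :
    ¬ ∃ v : 𝓞 K, (r : 𝓞 K) - v ^ 2 ∈ Ideal.span ({8} : Set (𝓞 K)) := by
  rintro ⟨v, hv⟩
  obtain ⟨w, hw⟩ := Ideal.mem_span_singleton.mp hv
  have hvw : (r : K) - (v : K) ^ 2 = 8 * w := by
    simpa only [map_sub, map_mul, map_pow, map_intCast, map_ofNat] using
      congrArg (algebraMap (𝓞 K) K) hw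
  obtain ⟨q, a, b, q_odd, hqv⟩ := exists_odd_mul_eq_add_mul_of_isIntegral hd4 hs v.isIntegral_coe
  obtain ⟨m, e, f, m_odd, hmw⟩ := exists_odd_mul_eq_add_mul_of_isIntegral hd4 hs w.isIntegral_coe
  obtain ⟨rational_part, sqrt_part⟩ :
      m * (r * q ^ 2 - (a ^ 2 + d * b ^ 2)) = 8 * (q ^ 2 * e) ∧
        m * (-(2 * (a * b))) = 8 * (q ^ 2 * f) := by
    refine eq_and_eq_of_add_mul_eq_add_mul (not_isSquare_of_emod_four hd4) hs ?_
    push_cast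
    linear_combination m * q ^ 2 * hvw + m * (q * v + a + b * s) * hqv + 8 * q ^ 2 * hmw
      + m * b ^ 2 * hs
  have norm_modEq : r * q ^ 2 ≡ a ^ 2 + d * b ^ 2 [ZMOD 8] :=
    (Int.modEq_iff_dvd.mpr (two_pow_dvd_of_dvd_odd_mul 3 m_odd ⟨_, rational_part⟩)).symm
  have four_dvd_mul : 4 ∣ a * b := by
    have eight_dvd : 8 ∣ -(2 * (a * b)) := two_pow_dvd_of_dvd_odd_mul 3 m_odd ⟨_, sqrt_part⟩
    omega
  rcases four_dvd_or_modEq_of_mul_sq_modEq q_odd norm_modEq four_dvd_mul with h | h | h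
  exacts [hr4 h, hr8 h, hrd8 h]

theorem not_square_mod_16_in_real_quadratic_2_3_mod_4
    (d : ℕ) (hd : Squarefree d) (hdpos : 0 < d) (hd4 : d % 4 = 2 ∨ d % 4 = 3)
    -- `K = ℚ(√d)`
    (K : Type*) [Field K] [NumberField K]
    (s : K) (hs : s ^ 2 = (d : K)) (hK2 : Module.finrank ℚ K = 2)
    (r : ℕ) (hr : r.Prime) (hodd : Odd r)
    (hr8 : r % 8 ≠ 1) (hrd8 : r % 8 ≠ d % 8) :
    ¬ ∃ v : 𝓞 K, (r : 𝓞 K) - v ^ 2 ∈ Ideal.span ({(16 : 𝓞 K)} : Set (𝓞 K)) := by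
  have : Algebra.IsQuadraticExtension ℚ K := ⟨hK2⟩
  rintro ⟨v, hv⟩
  have hv8 : (r : 𝓞 K) - v ^ 2 ∈ Ideal.span {8} :=
    Ideal.span_singleton_le_span_singleton.mpr ⟨2, by norm_num⟩ hv
  exact not_square_mod_16_in_real_quadratic_2_3_mod_4_general d (by omega) K s (by simpa using hs)
    r (by grind) (by omega) (by omega) ⟨v, by simpa using hv8⟩
end
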